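/- arXiv:cs/0406008 — 5 statements merged into one kernel-verified Lean document; each statement's English description precedes it below -/
import Mathlib

section
/- Suppose ψ̃ has M vanishing moments. Then for every M times continuously differentiable function f : ℝ → ℝ, every σ > 0 and every θ ∈ ℝ, one has ∫_ℝ f(x) ψ̃(σx − θ) dx = (−1)^M σ^{−M} ∫_ℝ f^{(M)}(x) Ψ_M(σx − θ) dx; in particular both integrands are supported in the window I(σ,θ), so both integrals exist. -/
open MeasureTheory

/-- Iterated antiderivatives of a wavelet: `Psi L ψ 0 = ψ` and
`Psi L ψ (m+1) x = ∫_{-L}^x Psi L ψ m t dt`. -/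
noncomputable def Psi (L : ℝ) (ψ : ℝ → ℝ) : ℕ → ℝ → ℝ
  | 0 => ψ
  | m + 1 => fun x => ∫ t in (-L)..x, Psi L ψ m t

structure WavOK (L : ℝ) (g : ℝ → ℝ) : Prop where
  meas : Measurable g
  bdd : ∃ B : ℝ, ∀ x, |g x| ≤ B
  supp : ∀ x : ℝ, L < |x| → g x = 0

lemma WavOK.integrable_mul {L : ℝ} {g : ℝ → ℝ} (h : WavOK L g) {f : ℝ → ℝ}
    (hf : Continuous f) : Integrable (fun x => f x * g x) := by
  obtain ⟨B, hB⟩ := h.bdd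
  have h1 : IntegrableOn f (Set.Icc (-L) L) := hf.integrableOn_Icc
  have h2 : IntegrableOn (fun x => f x * g x) (Set.Icc (-L) L) := by
    refine Integrable.mul_bdd (c := B) h1 h.meas.aestronglyMeasurable ?_
    exact Filter.Eventually.of_forall hB
  rw [← integrableOn_iff_integrable_of_support_subset (s := Set.Icc (-L) L)]
  · exact h2
  · intro x hx
    by_contra hx'
    apply hx
    have : L < |x| := by
      by_contra hc
      exact hx' (abs_le.1 (not_lt.1 hc))
    simp [h.supp x this]

lemma WavOK.integrable {L : ℝ} {g : ℝ → ℝ} (h : WavOK L g) : Integrable g := by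
  simpa using h.integrable_mul (f := fun _ => 1) continuous_const

/-- An integral of a function supported in `[-L, L]` is an interval integral. -/
lemma integral_eq_interval {L : ℝ} (hL : 0 < L) {g : ℝ → ℝ}
    (h : ∀ x : ℝ, L < |x| → g x = 0) : ∫ x, g x = ∫ x in (-L)..L, g x := by
  rw [intervalIntegral.integral_of_le (by linarith), ← integral_Icc_eq_integral_Ioc]
  refine (setIntegral_eq_integral_of_forall_compl_eq_zero ?_).symm
  intro x hx
  apply h
  by_contra hc
  exact hx (abs_le.1 (not_lt.1 hc))

lemma WavOK.step {L : ℝ} (hL : 0 < L) {g : ℝ → ℝ} (h : WavOK L g)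
    (h0 : ∫ x, g x = 0) : WavOK L (fun x => ∫ t in (-L)..x, g t) where
  meas := by
    have := intervalIntegral.continuous_primitive (f := g) (μ := volume)
      (fun a b => h.integrable.intervalIntegrable) (-L)
    exact this.measurable
  bdd := by
    refine ⟨∫ t, ‖g t‖, fun x => ?_⟩
    rw [← Real.norm_eq_abs]
    refine (intervalIntegral.norm_integral_le_integral_norm_uIoc).trans ?_
    exact setIntegral_le_integral h.integrable.norm (Filter.Eventually.of_forall fun _ => norm_nonneg _)
  supp := by
    intro x hx
    rcases lt_abs.1 hx with hx | hx
    · rw [← intervalIntegral.integral_add_adjacent_intervals (b := L)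
        h.integrable.intervalIntegrable h.integrable.intervalIntegrable,
        ← integral_eq_interval hL h.supp, h0, zero_add,
        intervalIntegral.integral_of_le hx.le]
      refine setIntegral_eq_zero_of_forall_eq_zero fun t ht => h.supp t (lt_abs.2 (Or.inl ht.1))
    · rw [intervalIntegral.integral_symm, intervalIntegral.integral_of_le (by linarith),
        integral_Ioc_eq_integral_Ioo, neg_eq_zero]
      refine setIntegral_eq_zero_of_forall_eq_zero fun t ht =>
        h.supp t (lt_abs.2 (Or.inr (by linarith [ht.2])))

lemma WavOK.parts {L : ℝ} (hL : 0 < L) {g : ℝ → ℝ} (h : WavOK L g)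
    (h0 : ∫ x, g x = 0) {f : ℝ → ℝ} (hf : ContDiff ℝ 1 f) :
    ∫ x, f x * g x = - ∫ x, deriv f x * ∫ t in (-L)..x, g t := by
  have hs := h.step hL h0
  rw [integral_eq_interval hL (g := fun x => f x * g x) (fun x hx => by simp [h.supp x hx]),
    integral_eq_interval hL (g := fun x => deriv f x * ∫ t in (-L)..x, g t)
      (fun x hx => by rw [show (∫ t in (-L)..x, g t) = 0 from hs.supp x hx, mul_zero])]
  have hac : AbsolutelyContinuousOnInterval (fun x => ∫ t in (-L)..x, g t) (-L) L :=
    h.integrable.intervalIntegrable.absolutelyContinuousOnInterval_intervalIntegral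
      Set.left_mem_uIcc
  have hfac : AbsolutelyContinuousOnInterval f (-L) L :=
    hf.contDiffOn.absolutelyContinuousOnInterval
  have key := hfac.integral_mul_deriv_eq_deriv_mul hac
  have hb : (∫ t in (-L)..L, g t) = 0 := by rw [← integral_eq_interval hL h.supp, h0]
  rw [hb, intervalIntegral.integral_same] at key
  simp only [mul_zero, sub_zero, zero_sub] at key
  rw [← key]
  apply intervalIntegral.integral_congr_ae
  filter_upwards [_root_.LocallyIntegrable.ae_hasDerivAt_integral h.integrable.locallyIntegrable] with x hx _
  rw [(hx (-L)).deriv]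

lemma Psi_succ' (L : ℝ) (ψ : ℝ → ℝ) (m : ℕ) :
    Psi L ψ (m + 1) = Psi L (fun x => ∫ t in (-L)..x, ψ t) m := by
  induction m with
  | zero => rfl
  | succ m ih => rw [Psi, ih, Psi]

lemma wav_main {L : ℝ} (hL : 0 < L) (M : ℕ) : ∀ (ψ : ℝ → ℝ), WavOK L ψ →
    (∀ k : ℕ, k < M → ∫ x : ℝ, x ^ k * ψ x = 0) →
    WavOK L (Psi L ψ M) ∧ ∀ f : ℝ → ℝ, ContDiff ℝ M f →
      ∫ x, f x * ψ x = (-1 : ℝ) ^ M * ∫ x, iteratedDeriv M f x * Psi L ψ M x := by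
  induction M with
  | zero => intro ψ h _; exact ⟨h, fun f _ => by simp [Psi]⟩
  | succ M ih =>
    intro ψ h hm
    have h0 : ∫ x, ψ x = 0 := by simpa using hm 0 (by omega)
    have hs := h.step hL h0
    have hm' : ∀ k : ℕ, k < M → ∫ x : ℝ, x ^ k * (∫ t in (-L)..x, ψ t) = 0 := by
      intro k hk
      have h1 := h.parts hL h0 (f := fun x => x ^ (k + 1)) (by fun_prop)
      rw [hm (k + 1) (by omega)] at h1
      simp only [deriv_pow_field, Nat.add_sub_cancel, mul_assoc] at h1
      rw [integral_const_mul] at h1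
      have : ((k + 1 : ℕ) : ℝ) ≠ 0 := by positivity
      have h2 := neg_eq_zero.1 h1.symm
      exact (mul_eq_zero.1 h2).resolve_left this
    obtain ⟨ha, hb⟩ := ih _ hs hm'
    rw [Psi_succ']
    refine ⟨ha, fun f hf => ?_⟩
    have hf' : ContDiff ℝ ((M : WithTop ℕ∞) + 1) f := by exact_mod_cast hf
    rw [h.parts hL h0 (hf.of_le (by simp)), hb (deriv f) (contDiff_succ_iff_deriv.1 hf').2.2,
      iteratedDeriv_succ']
    ring

/-- If `ψ̃` has `M` vanishing moments then for every `C^M` function `f`, every `σ > 0`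
and `θ ∈ ℝ`, `∫ f(x) ψ̃(σx − θ) dx = (−1)^M σ^{−M} ∫ f^{(M)}(x) Ψ_M(σx − θ) dx`; both
integrands are supported in the window `I(σ,θ) = [(θ−L)/σ, (θ+L)/σ]` and both
integrals exist. -/
theorem rect_wavelet_coef_partial_integration
    (M : ℕ) (hM : 0 < M) (L : ℝ) (hL : 0 < L)
    (ψ : ℝ → ℝ) (hmeas : Measurable ψ) (hbdd : ∃ B : ℝ, ∀ x, |ψ x| ≤ B)
    (hsupp : ∀ x : ℝ, L < |x| → ψ x = 0)
    (hmom : ∀ k : ℕ, k < M → ∫ x : ℝ, x ^ k * ψ x = 0) :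
    ∀ f : ℝ → ℝ, ContDiff ℝ M f → ∀ σ : ℝ, 0 < σ → ∀ θ : ℝ,
      (∀ x : ℝ, x ∉ Set.Icc ((θ - L) / σ) ((θ + L) / σ) → f x * ψ (σ * x - θ) = 0) ∧
      (∀ x : ℝ, x ∉ Set.Icc ((θ - L) / σ) ((θ + L) / σ) →
        iteratedDeriv M f x * Psi L ψ M (σ * x - θ) = 0) ∧
      Integrable (fun x : ℝ => f x * ψ (σ * x - θ)) ∧
      Integrable (fun x : ℝ => iteratedDeriv M f x * Psi L ψ M (σ * x - θ)) ∧
      ∫ x : ℝ, f x * ψ (σ * x - θ) =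
        (-1 : ℝ) ^ M * σ ^ (-(M : ℤ)) *
          ∫ x : ℝ, iteratedDeriv M f x * Psi L ψ M (σ * x - θ) := by
  intro f hf σ hσ θ
  have hσ0 : σ ≠ 0 := hσ.ne'
  have h : WavOK L ψ := ⟨hmeas, hbdd, hsupp⟩
  obtain ⟨hP, hmain⟩ := wav_main hL M ψ h hmom
  have hwin : ∀ x : ℝ, x ∉ Set.Icc ((θ - L) / σ) ((θ + L) / σ) → L < |σ * x - θ| := by
    intro x hx
    by_contra hc
    have hc' := abs_le.1 (not_lt.1 hc)
    apply hx
    constructor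
    · rw [div_le_iff₀ hσ]; linarith
    · rw [le_div_iff₀ hσ]; linarith
  have hinv : ∀ x : ℝ, σ⁻¹ * (σ * x - θ + θ) = x := by
    intro x; field_simp; ring
  have key : ∀ F : ℝ → ℝ, ∫ x, F (σ * x - θ) = σ⁻¹ * ∫ y, F y := by
    intro F
    rw [Measure.integral_comp_mul_left (fun y => F (y - θ)) σ, integral_sub_right_eq_self F θ,
      abs_of_pos (inv_pos.2 hσ), smul_eq_mul]
  have keyI : ∀ F : ℝ → ℝ, Integrable F → Integrable (fun x => F (σ * x - θ)) := by
    intro F hF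
    exact (hF.comp_sub_right θ).comp_mul_left' hσ0
  have e1 : ∀ u v : ℝ → ℝ, (fun x => u x * v (σ * x - θ)) =
      fun x => (fun y => u (σ⁻¹ * (y + θ)) * v y) (σ * x - θ) := by
    intro u v; funext x; simp only [hinv]
  have hcd : Continuous (iteratedDeriv M f) := hf.continuous_iteratedDeriv M le_rfl
  refine ⟨fun x hx => by rw [hsupp _ (hwin x hx), mul_zero],
    fun x hx => by rw [hP.supp _ (hwin x hx), mul_zero], ?_, ?_, ?_⟩
  · rw [e1]
    exact keyI _ (h.integrable_mul (f := fun y => f (σ⁻¹ * (y + θ)))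
      (hf.continuous.comp (by fun_prop)))
  · rw [e1]
    exact keyI _ (hP.integrable_mul (f := fun y => iteratedDeriv M f (σ⁻¹ * (y + θ)))
      (hcd.comp (by fun_prop)))
  · rw [e1 f ψ, e1 (iteratedDeriv M f) (Psi L ψ M), key (fun y => f (σ⁻¹ * (y + θ)) * ψ y),
      key (fun y => iteratedDeriv M f (σ⁻¹ * (y + θ)) * Psi L ψ M y),
      hmain (fun y => f (σ⁻¹ * (y + θ))) (hf.comp (by fun_prop))]
    have e2 : iteratedDeriv M (fun y => f (σ⁻¹ * (y + θ))) =
        fun y => (σ⁻¹) ^ M * iteratedDeriv M f (σ⁻¹ * (y + θ)) := by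
      rw [iteratedDeriv_comp_add_const M (fun z => f (σ⁻¹ * z)) θ,
        iteratedDeriv_comp_const_mul hf]
    simp only [e2, mul_assoc]
    rw [integral_const_mul, zpow_neg, zpow_natCast, inv_pow]
    ring
end

section
/- Suppose ψ̃ has M vanishing moments and let p ≥ 1. Then there exists a constant C > 0, depending only on ψ̃, M, L and p, such that for every M times continuously differentiable function f : ℝ → ℝ, every σ > 0 and every θ ∈ ℝ, |∫_ℝ f(x) ψ̃(σx − θ) dx| ≤ C · σ^{−(M+1−1/p)} · ( ∫_{I(σ,θ)} |f^{(M)}(x)|^p dx )^{1/p}. -/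
open MeasureTheory

lemma rw_holder (p : ℝ) (hp : 1 ≤ p) (a b : ℝ) (hab : a ≤ b) (g : ℝ → ℝ) (hg : Continuous g) :
    ∫ x in Set.Icc a b, |g x| ≤
      (b - a) ^ (1 - 1 / p) * (∫ x in Set.Icc a b, |g x| ^ p) ^ (1 / p) := by
  rcases hp.eq_or_lt with rfl | hp1
  · simp
  have hpq := Real.HolderConjugate.conjExponent hp1
  have hmem : ∀ (h : ℝ → ℝ) (r : ENNReal), Continuous h →
      MemLp h r (volume.restrict (Set.Icc a b)) := by
    intro h r hc
    obtain ⟨B, hB⟩ := (isCompact_Icc (a := a) (b := b)).exists_bound_of_continuousOn hc.continuousOn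
    refine MemLp.of_bound hc.aestronglyMeasurable B ?_
    exact (ae_restrict_iff' measurableSet_Icc).2 (Filter.Eventually.of_forall hB)
  have := integral_mul_le_Lp_mul_Lq_of_nonneg (μ := volume.restrict (Set.Icc a b)) hpq
    (f := fun x => |g x|) (g := fun _ => (1 : ℝ))
    (Filter.Eventually.of_forall fun x => abs_nonneg _)
    (Filter.Eventually.of_forall fun x => zero_le_one)
    (hmem _ _ hg.abs) (hmem _ _ continuous_const)
  have e : 1 / p.conjExponent = 1 - 1 / p := by
    have := hpq.inv_add_inv_eq_one
    simp only [one_div]; linarith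
  rw [e] at this
  simp only [mul_one, Real.one_rpow, integral_const, smul_eq_mul, measureReal_restrict_apply_univ,
    Real.volume_real_Icc_of_le hab] at this
  linarith

lemma rw_taylor (n : ℕ) (f : ℝ → ℝ) (hf : ContDiff ℝ (n + 1 : ℕ) f) (x₀ x : ℝ) :
    f x - ∑ k ∈ Finset.range (n + 1), ((k.factorial : ℝ)⁻¹ * (x - x₀) ^ k) * iteratedDeriv k f x₀ =
      ∫ t in x₀..x, ((x - t) ^ n / n.factorial) * iteratedDeriv (n + 1) f t := by
  rcases eq_or_ne x₀ x with rfl | hne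
  · simp [Finset.sum_range_succ']
  have hu := uniqueDiffOn_uIcc hne
  have h := taylor_integral_remainder (x := x) (x₀ := x₀) hf.contDiffOn
  rw [taylor_within_apply] at h
  have h1 : ∀ k ∈ Finset.range (n + 1),
      ((k.factorial : ℝ)⁻¹ * (x - x₀) ^ k) • iteratedDerivWithin k f (Set.uIcc x₀ x) x₀
      = ((k.factorial : ℝ)⁻¹ * (x - x₀) ^ k) * iteratedDeriv k f x₀ := by
    intro k hk
    rw [iteratedDerivWithin_eq_iteratedDeriv hu _ Set.left_mem_uIcc, smul_eq_mul]
    refine (hf.of_le ?_).contDiffAt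
    have := Finset.mem_range.1 hk
    exact_mod_cast this.le
  rw [Finset.sum_congr rfl h1] at h
  rw [h]
  refine intervalIntegral.integral_congr fun t ht => ?_
  simp only [smul_eq_mul]
  rw [iteratedDerivWithin_eq_iteratedDeriv hu hf.contDiffAt ht]

lemma rw_rem (n : ℕ) (f : ℝ → ℝ) (hf : ContDiff ℝ (n + 1 : ℕ) f) (x₀ x r : ℝ)
    (hx : x ∈ Set.Icc (x₀ - r) (x₀ + r)) :
    |f x - ∑ k ∈ Finset.range (n + 1),
        ((k.factorial : ℝ)⁻¹ * (x - x₀) ^ k) * iteratedDeriv k f x₀| ≤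
      r ^ n * ∫ t in Set.Icc (x₀ - r) (x₀ + r), |iteratedDeriv (n + 1) f t| := by
  rw [rw_taylor n f hf]
  have hr : 0 ≤ r := by linarith [hx.1, hx.2]
  have hc : Continuous (iteratedDeriv (n + 1) f) := hf.continuous_iteratedDeriv _ le_rfl
  have hsub : Set.uIoc x₀ x ⊆ Set.Icc (x₀ - r) (x₀ + r) :=
    Set.uIoc_subset_uIcc.trans
      (Set.uIcc_subset_Icc ⟨by linarith, by linarith⟩ hx)
  have hInt : IntegrableOn (fun t => r ^ n * |iteratedDeriv (n + 1) f t|)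
      (Set.Icc (x₀ - r) (x₀ + r)) :=
    (continuous_const.mul hc.abs).continuousOn.integrableOn_compact isCompact_Icc
  rw [← Real.norm_eq_abs, intervalIntegral.norm_intervalIntegral_eq]
  refine (norm_integral_le_of_norm_le (hInt.mono_set hsub) ?_).trans ?_
  · refine (ae_restrict_iff' measurableSet_uIoc).2 (Filter.Eventually.of_forall fun t ht => ?_)
    rw [norm_mul, Real.norm_eq_abs, Real.norm_eq_abs]
    refine mul_le_mul_of_nonneg_right ?_ (abs_nonneg _)
    rw [abs_div, abs_pow, Nat.abs_cast]
    have h1 : |x - t| ≤ r := by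
      have h2 : |x - t| ≤ |x - x₀| := Set.abs_sub_left_of_mem_uIcc
        (Set.uIcc_comm x₀ x ▸ Set.uIoc_subset_uIcc ht) |> fun h => by
          simpa [abs_sub_comm] using h
      refine h2.trans (abs_le.2 ⟨by linarith [hx.1], by linarith [hx.2]⟩)
    have h3 : (1 : ℝ) ≤ n.factorial := by exact_mod_cast n.factorial_pos
    refine (div_le_self (by positivity) h3).trans ?_
    gcongr
  · rw [← integral_const_mul]
    exact setIntegral_mono_set hInt
      (Filter.Eventually.of_forall fun t => by positivity) hsub.eventuallyLE

/-- For a wavelet `ψ̃` with `M` dual vanishing moments and `p ≥ 1` there is a constant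
`C > 0` (depending only on `ψ̃, M, L, p`) such that for every `C^M` function `f`,
every `σ > 0` and `θ ∈ ℝ`,
`|∫ f(x) ψ̃(σx − θ) dx| ≤ C σ^{−(M+1−1/p)} (∫_{I(σ,θ)} |f^{(M)}|^p)^{1/p}`. -/
theorem rect_wavelet_coef_upper_bound
    (M : ℕ) (hM : 0 < M) (L : ℝ) (hL : 0 < L) (p : ℝ) (hp : 1 ≤ p)
    (ψ : ℝ → ℝ) (hmeas : Measurable ψ) (hbdd : ∃ B : ℝ, ∀ x, |ψ x| ≤ B)
    (hsupp : ∀ x : ℝ, L < |x| → ψ x = 0)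
    (hmom : ∀ k : ℕ, k < M → ∫ x : ℝ, x ^ k * ψ x = 0) :
    ∃ C : ℝ, 0 < C ∧
      ∀ f : ℝ → ℝ, ContDiff ℝ M f → ∀ σ : ℝ, 0 < σ → ∀ θ : ℝ,
        |∫ x : ℝ, f x * ψ (σ * x - θ)| ≤
          C * σ ^ (-((M : ℝ) + 1 - 1 / p)) *
            (∫ x in Set.Icc ((θ - L) / σ) ((θ + L) / σ),
              |iteratedDeriv M f x| ^ p) ^ (1 / p) := by
  obtain ⟨n, rfl⟩ : ∃ n, M = n + 1 := ⟨M - 1, by omega⟩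
  obtain ⟨B, hB⟩ := hbdd
  have hB0 : 0 ≤ B := (abs_nonneg _).trans (hB 0)
  refine ⟨(B + 1) * (2 * L) * L ^ n * (2 * L) ^ (1 - 1 / p), by positivity, ?_⟩
  intro f hf σ hσ θ
  have hIa : (θ - L) / σ = θ / σ - L / σ := sub_div _ _ _
  have hIb : (θ + L) / σ = θ / σ + L / σ := add_div _ _ _
  rw [hIa, hIb]
  set x₀ := θ / σ with hx₀
  set r := L / σ with hr
  have hr0 : 0 < r := by positivity
  set S := Set.Icc (x₀ - r) (x₀ + r) with hS
  have hsx : ∀ x, σ * x - θ = σ * (x - x₀) := by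
    intro x; rw [hx₀]; field_simp
  have hzero : ∀ x, x ∉ S → ψ (σ * x - θ) = 0 := by
    intro x hx
    apply hsupp
    rw [hsx, abs_mul, abs_of_pos hσ]
    have h1 : r < |x - x₀| := by
      by_contra hcon
      have := abs_le.1 (not_lt.1 hcon)
      exact hx ⟨by linarith [this.1], by linarith [this.2]⟩
    have h2 : L = σ * r := by rw [hr]; field_simp
    rw [h2]
    exact mul_lt_mul_of_pos_left h1 hσ
  have hψm : Measurable fun x => ψ (σ * x - θ) := hmeas.comp (by fun_prop)
  have hInt : ∀ g : ℝ → ℝ, Continuous g → Integrable fun x => g x * ψ (σ * x - θ) := by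
    intro g hg
    have h1 : IntegrableOn (fun x => g x * ψ (σ * x - θ)) S := by
      refine Integrable.mul_bdd (c := B) (hg.continuousOn.integrableOn_compact isCompact_Icc)
        hψm.aestronglyMeasurable (Filter.Eventually.of_forall fun x => hB _)
    refine (integrableOn_iff_integrable_of_support_subset ?_).1 h1
    intro x hx
    by_contra hxS
    exact hx (by simp [hzero x hxS])
  have hmomσ : ∀ k, k < n + 1 → ∫ x : ℝ, (x - x₀) ^ k * ψ (σ * x - θ) = 0 := by
    intro k hk
    have h1 : ∀ x : ℝ, (x - x₀) ^ k * ψ (σ * x - θ) =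
        (fun y => (fun z => (σ ^ k)⁻¹ * (z ^ k * ψ z)) (σ * y)) (x - x₀) := by
      intro x
      simp only [hsx, mul_pow]
      field_simp
    simp_rw [h1]
    rw [integral_sub_right_eq_self (fun y => (fun z => (σ ^ k)⁻¹ * (z ^ k * ψ z)) (σ * y)) x₀,
      Measure.integral_comp_mul_left (fun z => (σ ^ k)⁻¹ * (z ^ k * ψ z)) σ, integral_const_mul, hmom k hk]
    simp
  set P : ℝ → ℝ := fun x => ∑ k ∈ Finset.range (n + 1),
        ((k.factorial : ℝ)⁻¹ * (x - x₀) ^ k) * iteratedDeriv k f x₀ with hP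
  have hPc : Continuous P := by rw [hP]; fun_prop
  have hPint : ∫ x, P x * ψ (σ * x - θ) = 0 := by
    have h1 : ∀ x, P x * ψ (σ * x - θ) = ∑ k ∈ Finset.range (n + 1),
        ((k.factorial : ℝ)⁻¹ * iteratedDeriv k f x₀) * ((x - x₀) ^ k * ψ (σ * x - θ)) := by
      intro x
      simp only [hP, Finset.sum_mul]
      exact Finset.sum_congr rfl fun k _ => by ring
    simp_rw [h1]
    rw [integral_finsetSum]
    · refine Finset.sum_eq_zero fun k hk => ?_
      rw [integral_const_mul, hmomσ k (Finset.mem_range.1 hk), mul_zero]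
    · intro k _
      exact (hInt (fun x => (x - x₀) ^ k) (by fun_prop)).const_mul _
  have hfc : Continuous f := hf.continuous
  have hdiff : ∫ x, f x * ψ (σ * x - θ) = ∫ x in S, (f x - P x) * ψ (σ * x - θ) := by
    rw [setIntegral_eq_integral_of_forall_compl_eq_zero
      (fun x hx => by rw [hzero x hx, mul_zero])]
    simp_rw [sub_mul]
    rw [integral_sub (hInt f hfc) (hInt P hPc), hPint, sub_zero]
  set K := ∫ t in S, |iteratedDeriv (n + 1) f t| with hK
  have hK0 : 0 ≤ K := integral_nonneg fun t => abs_nonneg _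
  have hmain : |∫ x, f x * ψ (σ * x - θ)| ≤ (r ^ n * K * B) * (2 * r) := by
    rw [hdiff]
    have h := norm_setIntegral_le_of_norm_le_const (μ := volume) (s := S)
      (f := fun x => (f x - P x) * ψ (σ * x - θ)) (C := r ^ n * K * B)
      (by simp [hS]) (fun x hx => by
        rw [norm_mul]
        exact mul_le_mul (rw_rem n f hf x₀ x r hx) (hB _) (norm_nonneg _) (by positivity))
    rw [hS, Real.volume_real_Icc_of_le (by linarith)] at h
    rw [Real.norm_eq_abs] at h
    convert h using 2
    ring
  have hH := rw_holder p hp (x₀ - r) (x₀ + r) (by linarith) _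
    (hf.continuous_iteratedDeriv _ le_rfl)
  rw [← hS, ← hK] at hH
  set J := (∫ x in S, |iteratedDeriv (n + 1) f x| ^ p) ^ (1 / p) with hJ
  have hJ0 : 0 ≤ J := by
    rw [hJ]; exact Real.rpow_nonneg (integral_nonneg fun t => by positivity) _
  have e1 : x₀ + r - (x₀ - r) = 2 * L / σ := by rw [hr]; ring
  rw [e1, Real.div_rpow (by positivity) hσ.le] at hH
  have e2 : σ ^ (-(((n + 1 : ℕ) : ℝ) + 1 - 1 / p)) = (σ ^ n * σ * σ ^ (1 - 1 / p))⁻¹ := by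
    rw [Real.rpow_neg hσ.le]
    congr 1
    rw [← Real.rpow_natCast, ← Real.rpow_add_one hσ.ne', ← Real.rpow_add hσ]
    congr 1
    push_cast; ring
  rw [e2]
  have hσp : 0 < σ ^ (1 - 1 / p) := Real.rpow_pos_of_pos hσ _
  calc _ ≤ (r ^ n * K * B) * (2 * r) := hmain
    _ ≤ (r ^ n * ((2 * L) ^ (1 - 1 / p) / σ ^ (1 - 1 / p) * J) * (B + 1)) * (2 * r) := by
        gcongr
        linarith
    _ = _ := by
        rw [hr, div_pow]
        field_simp
end

section
/- Suppose ψ̃ has M vanishing moments. Then for every σ > 0 and every θ ∈ ℝ, ∫_ℝ (x^M / M!) ψ̃(σx − θ) dx = (−1)^M σ^{−(M+1)} Ψ_{M+1}(L). -/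
open MeasureTheory

lemma Psi_locInt (L : ℝ) (ψ : ℝ → ℝ) (h : LocallyIntegrable ψ) (m : ℕ) :
    LocallyIntegrable (Psi L ψ m) := by
  induction m with
  | zero => exact h
  | succ m ih =>
    refine Continuous.locallyIntegrable ?_
    refine intervalIntegral.continuous_primitive (fun a b => ?_) (-L)
    exact intervalIntegrable_iff.mpr <|
      (ih.integrableOn_isCompact isCompact_uIcc).mono_set Set.uIoc_subset_uIcc

lemma parts_step (a b : ℝ) (f : ℝ → ℝ) (hf : LocallyIntegrable f) (m : ℕ) :
    ∫ t in a..b, (b - t) ^ (m + 1) * f t =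
      (m + 1) * ∫ t in a..b, (b - t) ^ m * (∫ s in a..t, f s) := by
  have hi : IntervalIntegrable f volume a b := intervalIntegrable_iff.mpr <|
      (hf.integrableOn_isCompact isCompact_uIcc).mono_set Set.uIoc_subset_uIcc
  have hac := hi.absolutelyContinuousOnInterval_intervalIntegral (c := a) (by simp)
  have hp : AbsolutelyContinuousOnInterval (fun t : ℝ => (b - t) ^ (m + 1)) a b := by
    apply ContDiffOn.absolutelyContinuousOnInterval
    fun_prop
  have key := hp.integral_mul_deriv_eq_deriv_mul hac
  have hd : ∀ t : ℝ, deriv (fun t : ℝ => (b - t) ^ (m + 1)) t = -((m + 1) * (b - t) ^ m) := by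
    intro t
    have h1 := ((hasDerivAt_id t).const_sub b).pow (m + 1)
    have h2 := h1.deriv
    simp only [id] at h2
    refine Eq.trans h2 ?_
    push_cast
    simp
  have e1 : ∫ t in a..b, (b - t) ^ (m + 1) * f t =
      ∫ t in a..b, (b - t) ^ (m + 1) * deriv (fun x => ∫ s in a..x, f s) t := by
    apply intervalIntegral.integral_congr_ae
    filter_upwards [_root_.LocallyIntegrable.ae_hasDerivAt_integral hf] with x hx _
    rw [(hx a).deriv]
  rw [e1, key]
  simp only [hd]
  simp [mul_assoc]

lemma Psi_top (L : ℝ) (ψ : ℝ → ℝ) (h : LocallyIntegrable ψ) (m : ℕ) : ∀ j : ℕ,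
    ∫ t in (-L)..L, (L - t) ^ m * Psi L ψ j t = m.factorial * Psi L ψ (j + m + 1) L := by
  induction m with
  | zero => intro j; simp [Psi]
  | succ m ih =>
    intro j
    rw [parts_step _ _ _ (Psi_locInt L ψ h j)]
    have := ih (j + 1)
    simp only [Psi] at this
    rw [this, Nat.factorial_succ]
    have e : j + 1 + m = j + (m + 1) := by ring
    rw [← e]
    simp only [Psi]
    push_cast
    ring

lemma shift_mom (M : ℕ) (ψ : ℝ → ℝ) (hi : ∀ k : ℕ, Integrable (fun x => x ^ k * ψ x))
    (hmom : ∀ k : ℕ, k < M → ∫ x : ℝ, x ^ k * ψ x = 0) (c : ℝ) :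
    ∫ x : ℝ, (x + c) ^ M * ψ x = ∫ x : ℝ, x ^ M * ψ x := by
  have e : ∀ x : ℝ, (x + c) ^ M * ψ x =
      ∑ k ∈ Finset.range (M + 1), (c ^ (M - k) * (M.choose k)) * (x ^ k * ψ x) := by
    intro x
    rw [add_pow, Finset.sum_mul]
    refine Finset.sum_congr rfl fun k _ => by ring
  simp only [e]
  rw [integral_finsetSum _ (fun k _ => (hi k).const_mul _)]
  simp only [integral_const_mul]
  rw [Finset.sum_range_succ, Finset.sum_eq_zero]
  · simp
  · intro k hk
    rw [hmom k (Finset.mem_range.mp hk), mul_zero]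

/-- If `ψ̃` has `M` vanishing moments then for every `σ > 0` and `θ ∈ ℝ`,
`∫ (x^M / M!) ψ̃(σx − θ) dx = (−1)^M σ^{−(M+1)} Ψ_{M+1}(L)`. -/
theorem rect_wavelet_monomial_coef
    (M : ℕ) (hM : 0 < M) (L : ℝ) (hL : 0 < L)
    (ψ : ℝ → ℝ) (hmeas : Measurable ψ) (hbdd : ∃ B : ℝ, ∀ x, |ψ x| ≤ B)
    (hsupp : ∀ x : ℝ, L < |x| → ψ x = 0)
    (hmom : ∀ k : ℕ, k < M → ∫ x : ℝ, x ^ k * ψ x = 0) :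
    ∀ σ : ℝ, 0 < σ → ∀ θ : ℝ,
      ∫ x : ℝ, x ^ M / (Nat.factorial M) * ψ (σ * x - θ) =
        (-1 : ℝ) ^ M * σ ^ (-(M + 1 : ℤ)) * Psi L ψ (M + 1) L := by
  intro σ hσ θ
  obtain ⟨B, hB⟩ := hbdd
  have hz : ∀ x, x ∉ Set.Icc (-L) L → ψ x = 0 := by
    intro x hx
    apply hsupp
    by_contra hc
    exact hx (abs_le.mp (not_lt.mp hc))
  have hloc : LocallyIntegrable ψ := by
    refine (locallyIntegrable_const B).mono hmeas.aestronglyMeasurable ?_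
    refine Filter.Eventually.of_forall fun x => ?_
    rw [Real.norm_eq_abs]
    exact (hB x).trans (le_abs_self B)
  have hi : ∀ k : ℕ, Integrable (fun x => x ^ k * ψ x) := by
    intro k
    have h1 : IntegrableOn (fun x => x ^ k * ψ x) (Set.Icc (-L) L) :=
      (hloc.integrableOn_isCompact isCompact_Icc).continuousOn_mul
        (by fun_prop) isCompact_Icc
    refine (integrableOn_iff_integrable_of_support_subset ?_).mp h1
    intro x hx
    by_contra hc
    exact hx (by simp [hz x hc])
  have hR : ∫ x : ℝ, (L - x) ^ M * ψ x = M.factorial * Psi L ψ (M + 1) L := by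
    have h1 := Psi_top L ψ hloc M 0
    rw [zero_add] at h1
    rw [← h1, intervalIntegral.integral_of_le (by linarith), ← integral_Icc_eq_integral_Ioc]
    refine (setIntegral_eq_integral_of_forall_compl_eq_zero ?_).symm
    intro x hx
    simp [hz x hx]
  have hR2 : ∫ x : ℝ, (L - x) ^ M * ψ x = (-1) ^ M * ∫ x : ℝ, x ^ M * ψ x := by
    rw [← shift_mom M ψ hi hmom (-L), ← integral_const_mul]
    congr 1
    ext x
    rw [← mul_assoc, ← mul_pow]
    congr 2
    ring
  have hL1 : ∫ x : ℝ, x ^ M / (Nat.factorial M) * ψ (σ * x - θ) =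
      σ⁻¹ * ∫ y : ℝ, (σ⁻¹ ^ M / M.factorial) * ((y + θ) ^ M * ψ y) := by
    have h1 := Measure.integral_comp_mul_left
      (fun y : ℝ => (σ⁻¹ ^ M / M.factorial) * (y ^ M * ψ (y - θ))) σ
    have h2 := integral_sub_right_eq_self (μ := (volume : Measure ℝ))
      (fun y : ℝ => (σ⁻¹ ^ M / M.factorial) * ((y + θ) ^ M * ψ y)) θ
    simp only [sub_add_cancel] at h2
    rw [← h2, ← smul_eq_mul, ← abs_of_pos (inv_pos.mpr hσ), abs_of_pos (inv_pos.mpr hσ)]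
    rw [abs_of_pos (inv_pos.mpr hσ)] at h1
    rw [← h1]
    congr 1
    ext x
    rw [mul_pow, inv_pow]
    field_simp
  rw [hL1, integral_const_mul, shift_mom M ψ hi hmom θ]
  have h3 : ∫ x : ℝ, x ^ M * ψ x = (-1) ^ M * (M.factorial * Psi L ψ (M + 1) L) := by
    rw [← hR, hR2, ← mul_assoc, ← mul_pow]
    simp
  have h4 : σ ^ (-(M + 1 : ℤ)) = σ⁻¹ * σ⁻¹ ^ M := by
    rw [zpow_neg, ← pow_succ', inv_pow]
    norm_cast
  have hfac : (M.factorial : ℝ) ≠ 0 := by positivity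
  rw [h3, h4]
  field_simp
end

section
/- Suppose ψ̃ has M vanishing moments but does not have M+1 vanishing moments (i.e. ∫_ℝ x^M ψ̃(x) dx ≠ 0), and let p ≥ 1. Then there exist a constant C > 0 and an M times continuously differentiable function f : ℝ → ℝ (one may take f(x) = x^M / M!) such that for every σ > 0 and every θ ∈ ℝ, |∫_ℝ f(x) ψ̃(σx − θ) dx| ≥ (1/C) · σ^{−(M+1−1/p)} · ( ∫_{I(σ,θ)} |f^{(M)}(x)|^p dx )^{1/p}. -/
open MeasureTheory

/-- All moments of a bounded measurable function of bounded support exist. -/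
theorem moment_integrable (L : ℝ) (ψ : ℝ → ℝ) (hmeas : Measurable ψ)
    (hbdd : ∃ B : ℝ, ∀ x, |ψ x| ≤ B) (hsupp : ∀ x : ℝ, L < |x| → ψ x = 0) (k : ℕ) :
    Integrable (fun x : ℝ => x ^ k * ψ x) := by
  obtain ⟨B, hB⟩ := hbdd
  have h : IntegrableOn (fun x : ℝ => x ^ k * ψ x) (Set.Icc (-L) L) := by
    have hc : IntegrableOn (fun x : ℝ => x ^ k) (Set.Icc (-L) L) :=
      (continuous_pow k).continuousOn.integrableOn_Icc
    exact Integrable.mul_bdd (c := B) hc hmeas.aestronglyMeasurable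
      (Filter.Eventually.of_forall fun x => by simpa using hB x)
  refine (integrableOn_iff_integrable_of_support_subset ?_).mp h
  intro x hx
  by_contra hn
  apply hx
  have : L < |x| := by
    by_contra hc
    exact hn (abs_le.mp (not_lt.mp hc))
  simp [hsupp x this]

/-- If `ψ̃` has `M` vanishing moments but not `M+1` (i.e. `∫ x^M ψ̃(x) dx ≠ 0`) and
`p ≥ 1`, then there are a constant `C > 0` and a `C^M` function `f` (one may take
`f(x) = x^M / M!`) such that for all `σ > 0` and `θ ∈ ℝ`,
`|∫ f(x) ψ̃(σx − θ) dx| ≥ (1/C) σ^{−(M+1−1/p)} (∫_{I(σ,θ)} |f^{(M)}|^p)^{1/p}`. -/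
theorem rect_wavelet_coef_lower_bound
    (M : ℕ) (hM : 0 < M) (L : ℝ) (hL : 0 < L) (p : ℝ) (hp : 1 ≤ p)
    (ψ : ℝ → ℝ) (hmeas : Measurable ψ) (hbdd : ∃ B : ℝ, ∀ x, |ψ x| ≤ B)
    (hsupp : ∀ x : ℝ, L < |x| → ψ x = 0)
    (hmom : ∀ k : ℕ, k < M → ∫ x : ℝ, x ^ k * ψ x = 0)
    (hlastmom : (∫ x : ℝ, x ^ M * ψ x) ≠ 0) :
    ∃ C : ℝ, 0 < C ∧ ∃ f : ℝ → ℝ, ContDiff ℝ M f ∧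
      ∀ σ : ℝ, 0 < σ → ∀ θ : ℝ,
        |∫ x : ℝ, f x * ψ (σ * x - θ)| ≥
          (1 / C) * σ ^ (-((M : ℝ) + 1 - 1 / p)) *
            (∫ x in Set.Icc ((θ - L) / σ) ((θ + L) / σ),
              |iteratedDeriv M f x| ^ p) ^ (1 / p) := by
  have hint : ∀ k : ℕ, Integrable (fun x : ℝ => x ^ k * ψ x) := moment_integrable L ψ hmeas hbdd hsupp
  set m := ∫ x : ℝ, x ^ M * ψ x with hm
  have hm0 : 0 < |m| := abs_pos.mpr hlastmom
  have hfac : (0 : ℝ) < (M.factorial : ℝ) := by exact_mod_cast M.factorial_pos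
  have h2L : 0 < (2 * L) ^ (1 / p) := by positivity
  refine ⟨M.factorial * (2 * L) ^ (1 / p) / |m|, by positivity,
    fun x => x ^ M / M.factorial, by fun_prop, ?_⟩
  intro σ hσ θ
  have hder : ∀ x : ℝ, iteratedDeriv M (fun x : ℝ => x ^ M / (M.factorial : ℝ)) x = 1 := by
    intro x
    have : (fun x : ℝ => x ^ M / (M.factorial : ℝ)) =
        fun x : ℝ => (M.factorial : ℝ)⁻¹ * x ^ M := by
      funext y; ring
    rw [this, iteratedDeriv_const_mul_field, iteratedDeriv_eq_iterate, iter_deriv_pow]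
    have hprod : ∏ i ∈ Finset.range M, ((M : ℝ) - (i : ℝ)) = (M.factorial : ℝ) := by
      rw [← Nat.descFactorial_self, Nat.descFactorial_eq_prod_range, Nat.cast_prod]
      refine Finset.prod_congr rfl fun i hi => ?_
      rw [Nat.cast_sub (Finset.mem_range.mp hi).le]
    rw [hprod]
    simp [hfac.ne']
  have hI : (∫ x in Set.Icc ((θ - L) / σ) ((θ + L) / σ),
      |iteratedDeriv M (fun x : ℝ => x ^ M / (M.factorial : ℝ)) x| ^ p) = 2 * L / σ := by
    simp only [hder, abs_one, Real.one_rpow]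
    have hle : (θ - L) / σ ≤ (θ + L) / σ := by gcongr; linarith
    rw [setIntegral_const, Real.volume_real_Icc_of_le hle]
    simp only [smul_eq_mul]
    ring
  have hJ : ∫ y : ℝ, (y + θ) ^ M * ψ y = m := by
    have he : ∀ y : ℝ, (y + θ) ^ M * ψ y =
        ∑ k ∈ Finset.range (M + 1), (θ ^ (M - k) * (M.choose k)) * (y ^ k * ψ y) := by
      intro y
      rw [add_pow, Finset.sum_mul]
      exact Finset.sum_congr rfl fun k _ => by ring
    simp only [he]
    rw [integral_finsetSum _ fun k _ => (hint k).const_mul _]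
    simp only [integral_const_mul]
    rw [Finset.sum_range_succ, Finset.sum_eq_zero]
    · simp [hm]
    · intro k hk
      rw [hmom k (Finset.mem_range.mp hk), mul_zero]
  have hlhs : ∫ x : ℝ, x ^ M / (M.factorial : ℝ) * ψ (σ * x - θ) =
      m * (M.factorial : ℝ)⁻¹ * (σ ^ (M + 1))⁻¹ := by
    have h1 : ∀ x : ℝ, x ^ M / (M.factorial : ℝ) * ψ (σ * x - θ) =
        ((M.factorial : ℝ)⁻¹ * (σ ^ M)⁻¹) *
          (fun z : ℝ => (fun y : ℝ => (y + θ) ^ M * ψ y) (z - θ)) (σ * x) := by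
      intro x
      simp only [sub_add_cancel, mul_pow]
      field_simp
    simp only [h1]
    rw [integral_const_mul,
      Measure.integral_comp_mul_left (fun z : ℝ => (fun y : ℝ => (y + θ) ^ M * ψ y) (z - θ)) σ,
      integral_sub_right_eq_self (fun y : ℝ => (y + θ) ^ M * ψ y) θ, hJ,
      abs_of_pos (inv_pos.mpr hσ), smul_eq_mul, pow_succ, mul_inv]
    ring
  have hσp : σ ^ (-((M : ℝ) + 1 - 1 / p)) = (σ ^ (M + 1))⁻¹ * σ ^ (1 / p) := by
    rw [show -((M : ℝ) + 1 - 1 / p) = -((M + 1 : ℕ) : ℝ) + 1 / p by push_cast; ring,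
      Real.rpow_add hσ, Real.rpow_neg hσ.le, Real.rpow_natCast]
  have hσ1 : 0 < σ ^ (1 / p) := by positivity
  rw [hI, hlhs, hσp, Real.div_rpow (by positivity) hσ.le, abs_mul, abs_mul,
    abs_of_pos (inv_pos.mpr hfac), abs_of_pos (show 0 < (σ ^ (M + 1))⁻¹ by positivity)]
  apply le_of_eq
  field_simp
end

section
/- Suppose ψ̃ has M vanishing moments and let p ≥ 1. Then there exists a constant C > 0, depending only on ψ̃, M, L and p, such that for every function f : ℝ² → ℝ all of whose partial derivatives ∂^{a+b}/∂x^a∂y^b f with 0 ≤ a ≤ M, 0 ≤ b ≤ M exist and are continuous, every σ₁, σ₂ > 0 and every θ₁, θ₂ ∈ ℝ, |∬_{ℝ²} f(x,y) ψ̃(σ₁x − θ₁) ψ̃(σ₂y − θ₂) dx dy| ≤ C · (σ₁σ₂)^{−(M+1−1/p)} · ( ∬_{R(σ₁,θ₁,σ₂,θ₂)} |∂^{2M} f/∂x^M∂y^M (x,y)|^p dy dx )^{1/p}. -/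
open MeasureTheory

/-- Mixed partial derivative `∂^{a+b} f/∂x^a ∂y^b` of `f : ℝ² → ℝ` (first `a` times
in `x`, then `b` times in `y`). -/
noncomputable def partialDeriv2 (a b : ℕ) (f : ℝ → ℝ → ℝ) : ℝ → ℝ → ℝ :=
  fun x y => iteratedDeriv b (fun y' => iteratedDeriv a (fun x' => f x' y') x) y

lemma aux_int (ψ : ℝ → ℝ) (L : ℝ) (hL : 0 < L) (hsupp : ∀ x : ℝ, L < |x| → ψ x = 0)
    (g : ℝ → ℝ) : ∫ x, g x * ψ x = ∫ x in (-(L+1))..(L+1), g x * ψ x := by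
  rw [intervalIntegral.integral_eq_integral_of_support_subset]
  intro x hx
  by_contra h
  apply hx
  have : L < |x| := by
    by_contra h2
    push Not at h2
    rw [abs_le] at h2
    exact h ⟨by linarith, by linarith⟩
  simp [hsupp x this]

lemma aux_integrable (ψ : ℝ → ℝ) (hmeas : Measurable ψ) (B : ℝ) (hB : ∀ x, |ψ x| ≤ B) (a b : ℝ) :
    IntervalIntegrable ψ volume a b := by
  apply IntervalIntegrable.mono_fun' (g := fun _ => B) (by simp) hmeas.aestronglyMeasurable
  exact Filter.Eventually.of_forall hB

lemma aux_step (ψ : ℝ → ℝ) (L : ℝ) (hL : 0 < L) (hmeas : Measurable ψ)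
    (hbdd : ∃ B : ℝ, ∀ x, |ψ x| ≤ B) (hsupp : ∀ x : ℝ, L < |x| → ψ x = 0)
    (h0 : ∫ x, ψ x = 0) :
    ∃ K : ℝ → ℝ, Measurable K ∧ (∃ B : ℝ, ∀ x, |K x| ≤ B) ∧ (∀ x : ℝ, L < |x| → K x = 0) ∧
      ∀ g : ℝ → ℝ, ContDiff ℝ 1 g → ∫ x, g x * ψ x = ∫ x, deriv g x * K x := by
  obtain ⟨B, hB⟩ := hbdd
  have hii := aux_integrable ψ hmeas B hB
  set Ψ : ℝ → ℝ := fun x => ∫ t in (-(L+1))..x, ψ t with hΨ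
  have hcont : Continuous Ψ := intervalIntegral.continuous_primitive hii _
  have hlow : ∀ x, x < -L → Ψ x = 0 := by
    intro x hx
    apply intervalIntegral.integral_zero_ae
    refine Filter.Eventually.of_forall fun t ht => hsupp t ?_
    rw [Set.mem_uIoc] at ht
    rw [lt_abs]; right
    rcases ht with h | h <;> linarith [h.2]
  have htot : ∫ t in (-(L+1))..(L+1), ψ t = 0 := by
    have := aux_int ψ L hL hsupp (fun _ => 1)
    simpa [h0] using this.symm
  have hhigh : ∀ x, L < x → Ψ x = 0 := by
    intro x hx
    have h1 : (∫ t in (-(L+1))..(L+1), ψ t) + ∫ t in (L+1)..x, ψ t = Ψ x :=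
      intervalIntegral.integral_add_adjacent_intervals (hii _ _) (hii _ _)
    rw [← h1, htot, zero_add]
    apply intervalIntegral.integral_zero_ae
    refine Filter.Eventually.of_forall fun t ht => hsupp t ?_
    rw [Set.mem_uIoc] at ht
    rw [lt_abs]; left
    rcases ht with h | h <;> linarith [h.1]
  have hz : ∀ x, L < |x| → Ψ x = 0 := by
    intro x hx
    rcases lt_abs.1 hx with h | h
    · exact hhigh x h
    · exact hlow x (by linarith)
  refine ⟨fun x => - Ψ x, hcont.measurable.neg, ?_, fun x hx => by simp [hz x hx], ?_⟩
  · obtain ⟨C, hC⟩ := (isCompact_Icc (a := -L) (b := L)).exists_bound_of_continuousOn hcont.continuousOn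
    refine ⟨max C 0, fun x => ?_⟩
    rw [abs_neg]
    by_cases h : L < |x|
    · simp [hz x h]
    · exact le_max_of_le_left (hC x (abs_le.1 (not_lt.1 h)))
  · intro g hg
    have hgac : AbsolutelyContinuousOnInterval g (-(L+1)) (L+1) :=
      hg.contDiffOn.absolutelyContinuousOnInterval
    have hpac : AbsolutelyContinuousOnInterval Ψ (-(L+1)) (L+1) :=
      (hii (-(L+1)) (L+1)).absolutelyContinuousOnInterval_intervalIntegral (by simp)
    have := hgac.integral_mul_deriv_eq_deriv_mul hpac
    rw [hz (L+1) (by rw [abs_of_pos] <;> linarith),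
      hz (-(L+1)) (by rw [abs_neg, abs_of_pos] <;> linarith)] at this
    rw [aux_int ψ L hL hsupp g,
      aux_int (fun x => -Ψ x) L hL (fun x hx => by simp [hz x hx]) (deriv g)]
    simp only [mul_neg, intervalIntegral.integral_neg]
    simp only [mul_zero, sub_self, zero_sub] at this
    rw [← this]
    apply intervalIntegral.integral_congr_ae
    filter_upwards [(hii (-(L+1)) (L+1)).ae_hasDerivAt_integral] with x hx hx2
    rw [(hx (Set.uIoc_subset_uIcc hx2) (-(L+1)) (by simp)).deriv]

lemma aux_kernel (L : ℝ) (hL : 0 < L) (M : ℕ) : ∀ (ψ : ℝ → ℝ) (hmeas : Measurable ψ)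
    (hbdd : ∃ B : ℝ, ∀ x, |ψ x| ≤ B) (hsupp : ∀ x : ℝ, L < |x| → ψ x = 0)
    (hmom : ∀ k : ℕ, k < M → ∫ x : ℝ, x ^ k * ψ x = 0),
    ∃ K : ℝ → ℝ, Measurable K ∧ (∃ B : ℝ, ∀ x, |K x| ≤ B) ∧ (∀ x : ℝ, L < |x| → K x = 0) ∧
      ∀ g : ℝ → ℝ, ContDiff ℝ M g → ∫ x, g x * ψ x = ∫ x, iteratedDeriv M g x * K x := by
  induction M with
  | zero =>
    intro ψ hmeas hbdd hsupp _
    exact ⟨ψ, hmeas, hbdd, hsupp, fun g _ => by simp⟩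
  | succ M ih =>
    intro ψ hmeas hbdd hsupp hmom
    obtain ⟨K, h1, h2, h3, h4⟩ := aux_step ψ L hL hmeas hbdd hsupp (by simpa using hmom 0 (by simp))
    obtain ⟨K', h1', h2', h3', h4'⟩ := ih K h1 h2 h3 (by
      intro k hk
      have := h4 (fun x => x ^ (k+1)) (by fun_prop)
      rw [hmom (k+1) (by omega)] at this
      simp only [deriv_pow_field, mul_assoc, integral_const_mul, Nat.add_sub_cancel] at this
      have h5 : ((k + 1 : ℕ) : ℝ) ≠ 0 := by positivity
      simpa [h5] using (mul_eq_zero.1 this.symm).resolve_left h5)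
    refine ⟨K', h1', h2', h3', fun g hg => ?_⟩
    have hg1 : ContDiff ℝ 1 g := hg.of_le (by simp)
    rw [h4 g hg1, iteratedDeriv_succ']
    apply h4'
    rw [Nat.cast_succ, contDiff_succ_iff_deriv] at hg
    exact hg.2.2

lemma aux_change (F : ℝ → ℝ) (σ θ : ℝ) (hσ : 0 < σ) :
    ∫ x, F (σ * x - θ) = σ⁻¹ * ∫ u, F u := by
  rw [Measure.integral_comp_mul_left (fun x => F (x - θ)) σ, integral_sub_right_eq_self F θ,
    abs_of_pos (by positivity), smul_eq_mul]

lemma aux_scaled (M : ℕ) (ψ K : ℝ → ℝ)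
    (h : ∀ g : ℝ → ℝ, ContDiff ℝ M g → ∫ x, g x * ψ x = ∫ x, iteratedDeriv M g x * K x)
    (g : ℝ → ℝ) (hg : ContDiff ℝ M g) (σ θ : ℝ) (hσ : 0 < σ) :
    ∫ x, g x * ψ (σ * x - θ) = (σ ^ M)⁻¹ * ∫ x, iteratedDeriv M g x * K (σ * x - θ) := by
  have e : ∀ x, σ⁻¹ * (σ * x - θ + θ) = x := fun x => by field_simp; ring
  have h1 := aux_change (fun u => g (σ⁻¹ * (u + θ)) * ψ u) σ θ hσ
  have h2 := aux_change (fun u => iteratedDeriv M g (σ⁻¹ * (u + θ)) * K u) σ θ hσ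
  simp only [e] at h1 h2
  rw [h1, h2, h (fun u => g (σ⁻¹ * (u + θ))) (by fun_prop)]
  rw [iteratedDeriv_comp_add_const M (fun z => g (σ⁻¹ * z)) θ, iteratedDeriv_comp_const_mul hg]
  simp only [mul_assoc, integral_const_mul, inv_pow]
  ring

lemma aux_prod_integrable (F : ℝ × ℝ → ℝ) (hF : Continuous F) (φ χ : ℝ → ℝ) (hφ : Measurable φ)
    (hχ : Measurable χ) (hφb : ∃ B : ℝ, ∀ x, |φ x| ≤ B) (hχb : ∃ B : ℝ, ∀ x, |χ x| ≤ B)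
    (a b c d : ℝ) (hφs : ∀ x, x ∉ Set.Icc a b → φ x = 0) (hχs : ∀ x, x ∉ Set.Icc c d → χ x = 0) :
    Integrable (fun z : ℝ × ℝ => F z * φ z.1 * χ z.2) := by
  obtain ⟨B, hB⟩ := hφb
  obtain ⟨B', hB'⟩ := hχb
  have hK : IsCompact (Set.Icc a b ×ˢ Set.Icc c d) := isCompact_Icc.prod isCompact_Icc
  have h1 : IntegrableOn F (Set.Icc a b ×ˢ Set.Icc c d) := hF.continuousOn.integrableOn_compact hK
  have h2 : IntegrableOn (fun z : ℝ × ℝ => F z * φ z.1 * χ z.2) (Set.Icc a b ×ˢ Set.Icc c d) := by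
    refine Integrable.mul_bdd (c := B') (Integrable.mul_bdd (c := B) h1 ?_ ?_) ?_ ?_
    · exact (hφ.comp measurable_fst).aestronglyMeasurable
    · exact Filter.Eventually.of_forall fun z => hB _
    · exact (hχ.comp measurable_snd).aestronglyMeasurable
    · exact Filter.Eventually.of_forall fun z => hB' _
  refine (integrableOn_iff_integrable_of_support_subset ?_).1 h2
  intro z hz
  by_contra h
  apply hz
  rw [Set.mem_prod, not_and_or] at h
  rcases h with h | h
  · simp [hφs _ h]
  · simp [hχs _ h]

lemma aux_supp (L : ℝ) (φ : ℝ → ℝ) (h : ∀ x : ℝ, L < |x| → φ x = 0) (σ θ : ℝ) (hσ : 0 < σ) :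
    ∀ x, x ∉ Set.Icc ((θ - L) / σ) ((θ + L) / σ) → φ (σ * x - θ) = 0 := by
  intro x hx
  apply h
  by_contra h2
  rw [not_lt, abs_le] at h2
  apply hx
  rw [Set.mem_Icc, div_le_iff₀ hσ, le_div_iff₀ hσ]
  constructor <;> nlinarith

lemma aux_holder (G : ℝ × ℝ → ℝ) (hG : Continuous G) (S : Set (ℝ × ℝ)) (hS : IsCompact S)
    (p : ℝ) (hp : 1 ≤ p) :
    ∫ z in S, |G z| ≤ (volume.real S) ^ (1 - 1 / p) * (∫ z in S, |G z| ^ p) ^ (1 / p) := by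
  rcases hp.eq_or_lt with rfl | hp
  · simp
  have hpq := Real.HolderConjugate.conjExponent hp
  haveI : IsFiniteMeasure (volume.restrict S) := ⟨by simpa using hS.measure_lt_top⟩
  have h1 : MemLp G (ENNReal.ofReal p) (volume.restrict S) := by
    obtain ⟨C, hC⟩ := hS.exists_bound_of_continuousOn hG.continuousOn
    refine MemLp.of_bound hG.aestronglyMeasurable C ?_
    exact (ae_restrict_iff' hS.measurableSet).2 (Filter.Eventually.of_forall hC)
  have h2 : MemLp (fun _ : ℝ × ℝ => (1:ℝ)) (ENNReal.ofReal p.conjExponent) (volume.restrict S) :=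
    memLp_const 1
  have := integral_mul_norm_le_Lp_mul_Lq hpq h1 h2
  have e : 1 / p.conjExponent = 1 - 1 / p := by
    have := hpq.inv_add_inv_eq_one
    simp only [one_div]; linarith
  rw [e] at this
  simpa [mul_comm] using this

/-- For a wavelet `ψ̃` with `M` dual vanishing moments and `p ≥ 1` there is a constant
`C > 0` such that for every `f : ℝ² → ℝ` with all mixed partials
`∂^{a+b} f/∂x^a∂y^b`, `0 ≤ a, b ≤ M`, existing and continuous, all `σ₁, σ₂ > 0` and
`θ₁, θ₂ ∈ ℝ`,
`|∬ f(x,y) ψ̃(σ₁x−θ₁) ψ̃(σ₂y−θ₂) dx dy| ≤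
  C (σ₁σ₂)^{−(M+1−1/p)} (∬_{R(σ₁,θ₁,σ₂,θ₂)} |∂^{2M} f/∂x^M∂y^M|^p)^{1/p}`. -/
theorem rect_wavelet_psi_psi_coef_bound
    (M : ℕ) (hM : 0 < M) (L : ℝ) (hL : 0 < L) (p : ℝ) (hp : 1 ≤ p)
    (ψ : ℝ → ℝ) (hmeas : Measurable ψ) (hbdd : ∃ B : ℝ, ∀ x, |ψ x| ≤ B)
    (hsupp : ∀ x : ℝ, L < |x| → ψ x = 0)
    (hmom : ∀ k : ℕ, k < M → ∫ x : ℝ, x ^ k * ψ x = 0) :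
    ∃ C : ℝ, 0 < C ∧
      ∀ f : ℝ → ℝ → ℝ,
        (∀ y : ℝ, ContDiff ℝ M fun x => f x y) →
        (∀ a : ℕ, a ≤ M → ∀ x : ℝ,
          ContDiff ℝ M fun y => iteratedDeriv a (fun x' => f x' y) x) →
        (∀ a b : ℕ, a ≤ M → b ≤ M →
          Continuous fun z : ℝ × ℝ => partialDeriv2 a b f z.1 z.2) →
        ∀ σ₁ σ₂ : ℝ, 0 < σ₁ → 0 < σ₂ → ∀ θ₁ θ₂ : ℝ,
          |∫ z : ℝ × ℝ, f z.1 z.2 * ψ (σ₁ * z.1 - θ₁) * ψ (σ₂ * z.2 - θ₂)| ≤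
            C * (σ₁ * σ₂) ^ (-((M : ℝ) + 1 - 1 / p)) *
              (∫ z in Set.Icc ((θ₁ - L) / σ₁) ((θ₁ + L) / σ₁) ×ˢ
                  Set.Icc ((θ₂ - L) / σ₂) ((θ₂ + L) / σ₂),
                |partialDeriv2 M M f z.1 z.2| ^ p) ^ (1 / p) := by
  obtain ⟨K, hKm, ⟨B, hB⟩, hKs, hK⟩ := aux_kernel L hL M ψ hmeas hbdd hsupp hmom
  have hB0 : 0 ≤ B := (abs_nonneg _).trans (hB 0)
  refine ⟨(B ^ 2 + 1) * (4 * L ^ 2) ^ (1 - 1 / p), by positivity, ?_⟩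
  intro f hf1 hf2 hf3 σ₁ σ₂ hσ₁ hσ₂ θ₁ θ₂
  set S := Set.Icc ((θ₁ - L) / σ₁) ((θ₁ + L) / σ₁) ×ˢ
                  Set.Icc ((θ₂ - L) / σ₂) ((θ₂ + L) / σ₂) with hS
  have hScomp : IsCompact S := isCompact_Icc.prod isCompact_Icc
  set D := fun z : ℝ × ℝ => partialDeriv2 M M f z.1 z.2 with hD
  have mψ : ∀ σ θ : ℝ, Measurable fun x => ψ (σ * x - θ) := fun σ θ => hmeas.comp (by fun_prop)
  have mK : ∀ σ θ : ℝ, Measurable fun x => K (σ * x - θ) := fun σ θ => hKm.comp (by fun_prop)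
  have bψ : ∀ σ θ : ℝ, ∃ B : ℝ, ∀ x, |ψ (σ * x - θ)| ≤ B :=
    fun σ θ => ⟨hbdd.choose, fun x => hbdd.choose_spec _⟩
  have bK : ∀ σ θ : ℝ, ∃ B : ℝ, ∀ x, |K (σ * x - θ)| ≤ B := fun σ θ => ⟨B, fun x => hB _⟩
  have sψ := fun σ θ => aux_supp L ψ hsupp σ θ
  have sK := fun σ θ => aux_supp L K hKs σ θ
  have i1 : Integrable fun z : ℝ × ℝ => f z.1 z.2 * ψ (σ₁ * z.1 - θ₁) * ψ (σ₂ * z.2 - θ₂) :=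
    aux_prod_integrable (fun z => f z.1 z.2)
      (by simpa [partialDeriv2] using hf3 0 0 (by simp) (by simp)) _ _ (mψ σ₁ θ₁) (mψ σ₂ θ₂)
      (bψ _ _) (bψ _ _) _ _ _ _ (sψ σ₁ θ₁ hσ₁) (sψ σ₂ θ₂ hσ₂)
  have i2 : Integrable fun z : ℝ × ℝ => iteratedDeriv M (fun x' => f x' z.2) z.1
      * K (σ₁ * z.1 - θ₁) * ψ (σ₂ * z.2 - θ₂) :=
    aux_prod_integrable (fun z => iteratedDeriv M (fun x' => f x' z.2) z.1)
      (by simpa [partialDeriv2] using hf3 M 0 le_rfl (by simp)) _ _ (mK σ₁ θ₁) (mψ σ₂ θ₂)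
      (bK _ _) (bψ _ _) _ _ _ _ (sK σ₁ θ₁ hσ₁) (sψ σ₂ θ₂ hσ₂)
  have i3 : Integrable fun z : ℝ × ℝ => D z * K (σ₁ * z.1 - θ₁) * K (σ₂ * z.2 - θ₂) :=
    aux_prod_integrable D (hf3 M M le_rfl le_rfl) _ _ (mK σ₁ θ₁) (mK σ₂ θ₂)
      (bK _ _) (bK _ _) _ _ _ _ (sK σ₁ θ₁ hσ₁) (sK σ₂ θ₂ hσ₂)
  have e1 : ∫ z : ℝ × ℝ, f z.1 z.2 * ψ (σ₁ * z.1 - θ₁) * ψ (σ₂ * z.2 - θ₂) =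
      (σ₁ ^ M)⁻¹ * ∫ z : ℝ × ℝ, iteratedDeriv M (fun x' => f x' z.2) z.1
      * K (σ₁ * z.1 - θ₁) * ψ (σ₂ * z.2 - θ₂) := by
    rw [Measure.volume_eq_prod] at i1 i2 ⊢
    rw [integral_prod_symm _ i1, integral_prod_symm _ i2, ← integral_const_mul]
    congr 1
    funext y
    simp only [integral_mul_const]
    rw [aux_scaled M ψ K hK (fun x => f x y) (hf1 y) σ₁ θ₁ hσ₁, mul_assoc]
  have e2 : ∫ z : ℝ × ℝ, iteratedDeriv M (fun x' => f x' z.2) z.1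
      * K (σ₁ * z.1 - θ₁) * ψ (σ₂ * z.2 - θ₂) =
      (σ₂ ^ M)⁻¹ * ∫ z : ℝ × ℝ, D z * K (σ₁ * z.1 - θ₁) * K (σ₂ * z.2 - θ₂) := by
    rw [Measure.volume_eq_prod] at i3 i2 ⊢
    rw [integral_prod _ i2, integral_prod _ i3, ← integral_const_mul]
    congr 1
    funext x
    simp only [mul_right_comm _ (K (σ₁ * x - θ₁))]
    simp only [integral_mul_const]
    rw [aux_scaled M ψ K hK (fun y => iteratedDeriv M (fun x' => f x' y) x)
      (hf2 M le_rfl x) σ₂ θ₂ hσ₂, mul_assoc]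
    rfl
  have e3 : |∫ z : ℝ × ℝ, D z * K (σ₁ * z.1 - θ₁) * K (σ₂ * z.2 - θ₂)| ≤
      B ^ 2 * ∫ z in S, |D z| := by
    rw [← setIntegral_eq_integral_of_forall_compl_eq_zero (s := S), ← integral_const_mul]
    · rw [← Real.norm_eq_abs]
      refine norm_integral_le_of_norm_le ?_ (Filter.Eventually.of_forall fun z => ?_)
      · exact (((hf3 M M le_rfl le_rfl).abs).continuousOn.integrableOn_compact hScomp).const_mul _
      · rw [Real.norm_eq_abs, abs_mul, abs_mul]
        have h1 := hB (σ₁ * z.1 - θ₁)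
        have h2 := hB (σ₂ * z.2 - θ₂)
        calc _ ≤ |D z| * B * B := by gcongr
          _ = _ := by ring
    · intro z h
      rw [hS, Set.mem_prod, not_and_or] at h
      rcases h with h | h
      · simp [sK _ _ hσ₁ _ h]
      · simp [sK _ _ hσ₂ _ h]
  have e4 := aux_holder D (hf3 M M le_rfl le_rfl) S hScomp p hp
  have e5 : volume.real S = (4 * L ^ 2) * (σ₁ * σ₂)⁻¹ := by
    rw [hS, Measure.volume_eq_prod, measureReal_prod_prod, Real.volume_real_Icc_of_le,
      Real.volume_real_Icc_of_le]
    · field_simp; ring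
    · gcongr; linarith
    · gcongr; linarith
  rw [e5, Real.mul_rpow (by positivity) (by positivity)] at e4
  have e6 : (σ₁ * σ₂) ^ (-((M : ℝ) + 1 - 1 / p)) =
      (σ₁ ^ M)⁻¹ * (σ₂ ^ M)⁻¹ * (σ₁ * σ₂)⁻¹ ^ (1 - 1 / p) := by
    rw [Real.inv_rpow (by positivity), ← Real.rpow_neg (by positivity), ← mul_inv, ← mul_pow,
      ← Real.rpow_natCast, ← Real.rpow_neg (by positivity), ← Real.rpow_add (by positivity)]
    congr 1; ring
  rw [e1, e2, e6, abs_mul, abs_mul, abs_of_pos (by positivity : 0 < (σ₁ ^ M)⁻¹),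
    abs_of_pos (by positivity : 0 < (σ₂ ^ M)⁻¹)]
  have hI : 0 ≤ ∫ z in S, |D z| := integral_nonneg fun z => abs_nonneg _
  calc _ ≤ (σ₁ ^ M)⁻¹ * ((σ₂ ^ M)⁻¹ * ((B ^ 2 + 1) * ((4 * L ^ 2) ^ (1 - 1 / p) *
      (σ₁ * σ₂)⁻¹ ^ (1 - 1 / p) * (∫ z in S, |D z| ^ p) ^ (1 / p)))) := by
        gcongr
        refine e3.trans ?_
        gcongr
        linarith
    _ = _ := by ring
end
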